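/- Let (H, g) be a finite type pivotal Hopf G-coalgebra over a field k and let t be a cyclic trace on H-pmod. Let V be a finite-dimensional projective H_α-module and let W be a finite-dimensional k-vector space regarded as an H_1-module with trivial action h·m = ε(h)m. Then for every H_α-linear endomorphism f of V ⊗ W one has t_{V⊗W}(f) = t_V(tr^r_W(f)), and for every H_α-linear endomorphism f of W ⊗ V one has t_{W⊗V}(f) = t_V(tr^l_W(f)). -/

import Mathlib

/-!
For trivial `W` the counit axiom makes `h ∈ H_α` act on `V ⊗ W` by `h • (v ⊗ w) = (h • v) ⊗ w`
(`deltaRep_trivial_right`, `deltaRep_trivial_left`). A basis `(bᵢ)` of `W` then exhibits `V ⊗ W`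
as a finite direct sum of copies of `V`, with `H_α`-linear inclusions `ιᵢ v = v ⊗ bᵢ` and
projections `πᵢ (v ⊗ w) = bⁱ(w) v` satisfying `∑ᵢ ιᵢ πᵢ = id`. Hence, by cyclicity,
`t(f) = ∑ᵢ t(f ιᵢ πᵢ) = ∑ᵢ t(πᵢ f ιᵢ) = t(∑ᵢ πᵢ f ιᵢ)` (`IsCyclicTrace.eq_of_decomposition`).
Since `ε(g₁) = 1`, the pivot acts as the identity on `W`, and `∑ᵢ πᵢ f ιᵢ` is the partial trace
of `f` (`trR_apply_of_smul_eq`, `trL_apply_of_smul_eq`). The case of `W ⊗ V` is symmetric.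
-/

open scoped TensorProduct

/-- Transport along an equality of indices, as an algebra isomorphism. -/
def castAlg (k : Type) [CommSemiring k] {G : Type} {H : G → Type}
    [∀ γ : G, Ring (H γ)] [∀ γ : G, Algebra k (H γ)]
    {γ γ' : G} (h : γ = γ') : H γ ≃ₐ[k] H γ' := by
  subst h; exact AlgEquiv.refl

/-- A Hopf `G`-coalgebra over a field `k`. -/
structure HopfGCoalgebra (k G : Type) [Field k] [Group G] (H : G → Type)
    [∀ γ : G, Ring (H γ)] [∀ γ : G, Algebra k (H γ)] where
  Δ : ∀ α β : G, H (α * β) →ₐ[k] (H α ⊗[k] H β)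
  ε : H (1 : G) →ₐ[k] k
  S : ∀ γ : G, H γ →ₗ[k] H γ⁻¹
  coassoc : ∀ (α β γ : G) (x : H (α * β * γ)),
    (TensorProduct.map (Δ α β).toLinearMap LinearMap.id) (Δ (α * β) γ x)
      = (TensorProduct.assoc k (H α) (H β) (H γ)).symm
          ((TensorProduct.map LinearMap.id (Δ β γ).toLinearMap)
            (Δ α (β * γ) (castAlg k (mul_assoc α β γ) x)))
  counit_right : ∀ (α : G) (x : H (α * 1)),
    (TensorProduct.rid k (H α)) ((TensorProduct.map LinearMap.id ε.toLinearMap) (Δ α 1 x))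
      = castAlg k (mul_one α) x
  counit_left : ∀ (α : G) (x : H (1 * α)),
    (TensorProduct.lid k (H α)) ((TensorProduct.map ε.toLinearMap LinearMap.id) (Δ 1 α x))
      = castAlg k (one_mul α) x
  antipode_left : ∀ (α : G) (x : H (α⁻¹ * α)),
    (LinearMap.mul' k (H α))
      ((TensorProduct.map ((castAlg k (inv_inv α)).toLinearMap ∘ₗ S α⁻¹) LinearMap.id)
        (Δ α⁻¹ α x))
      = ε (castAlg k (inv_mul_cancel α) x) • 1
  antipode_right : ∀ (α : G) (x : H (α * α⁻¹)),
    (LinearMap.mul' k (H α))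
      ((TensorProduct.map LinearMap.id ((castAlg k (inv_inv α)).toLinearMap ∘ₗ S α⁻¹))
        (Δ α α⁻¹ x))
      = ε (castAlg k (mul_inv_cancel α) x) • 1

namespace HopfGCoalgebra

variable {k G : Type} [Field k] [Group G] {H : G → Type}
  [∀ γ : G, Ring (H γ)] [∀ γ : G, Algebra k (H γ)]

/-- A family of linear forms is a right `G`-integral. -/
def IsRightIntegral (D : HopfGCoalgebra k G H) (μ : ∀ γ : G, H γ →ₗ[k] k) : Prop :=
  ∀ (α β : G) (x : H (α * β)),
    (TensorProduct.lid k (H β)) ((TensorProduct.map (μ α) LinearMap.id) (D.Δ α β x))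
      = μ (α * β) x • 1

/-- A family of linear forms is a left `G`-integral. -/
def IsLeftIntegral (D : HopfGCoalgebra k G H) (μ : ∀ γ : G, H γ →ₗ[k] k) : Prop :=
  ∀ (α β : G) (x : H (α * β)),
    (TensorProduct.rid k (H α)) ((TensorProduct.map LinearMap.id (μ β)) (D.Δ α β x))
      = μ (α * β) x • 1

/-- A family of invertible elements is a pivot. -/
structure IsPivot (D : HopfGCoalgebra k G H) (g : ∀ γ : G, (H γ)ˣ) : Prop where
  delta : ∀ α β : G, D.Δ α β (g (α * β) : H (α * β)) = (g α : H α) ⊗ₜ[k] (g β : H β)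
  counit : D.ε (g 1 : H 1) = 1
  antipode : ∀ (α : G) (x : H α),
    castAlg k (inv_inv α) (D.S α⁻¹ (D.S α x)) = (g α : H α) * x * ((g α)⁻¹ : (H α)ˣ)

/-- `H` is unimodular if `H₁` admits a nonzero two-sided cointegral. -/
def IsUnimodular (D : HopfGCoalgebra k G H) : Prop :=
  ∃ Λ : H 1, Λ ≠ 0 ∧ ∀ h : H 1, h * Λ = D.ε h • Λ ∧ Λ * h = D.ε h • Λ

/-- A `G`-comodulus for a right `G`-integral `μ`. -/
structure IsComodulus (D : HopfGCoalgebra k G H) (μ : ∀ γ : G, H γ →ₗ[k] k)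
    (a : ∀ γ : G, (H γ)ˣ) : Prop where
  delta : ∀ α β : G, D.Δ α β (a (α * β) : H (α * β)) = (a α : H α) ⊗ₜ[k] (a β : H β)
  counit : D.ε (a 1 : H 1) = 1
  rel : ∀ (α β : G) (x : H (α * β)),
    (TensorProduct.rid k (H α)) ((TensorProduct.map LinearMap.id (μ β)) (D.Δ α β x))
      = μ (α * β) x • (a α : H α)

end HopfGCoalgebra

namespace HopfGCoalgebra

variable {k G : Type} [Field k] [Group G] {H : G → Type}
  [∀ γ : G, Ring (H γ)] [∀ γ : G, Algebra k (H γ)]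

/-- The trivial `H₁`-module structure on a `k`-vector space, `h • w = ε(h) • w`. -/
def trivialModule (D : HopfGCoalgebra k G H) (W : Type) [AddCommGroup W] [Module k W] :
    Module (H (1 : G)) W :=
  Module.compHom W D.ε.toRingHom

theorem trivialModuleTower (D : HopfGCoalgebra k G H) (W : Type) [AddCommGroup W]
    [Module k W] :
    letI := D.trivialModule W
    IsScalarTower k (H (1 : G)) W := by
  letI := D.trivialModule W
  refine ⟨fun c h w => ?_⟩
  show D.ε (c • h) • w = c • (D.ε h • w)
  rw [map_smul, smul_eq_mul, mul_smul]

/-- The representation of `H_γ` (for `γ = αβ`) on `P ⊗ W` obtained from an `H_α`-module `P`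
and an `H_β`-module `W` through the coproduct `Δ_{α,β}`. -/
noncomputable def deltaRep (D : HopfGCoalgebra k G H) (α β γ : G) (hγ : γ = α * β)
    (P W : Type) [AddCommGroup P] [Module k P] [Module (H α) P] [IsScalarTower k (H α) P]
    [AddCommGroup W] [Module k W] [Module (H β) W] [IsScalarTower k (H β) W] :
    H γ →ₐ[k] Module.End k (P ⊗[k] W) :=
  (Module.endTensorEndAlgHom.comp
      (Algebra.TensorProduct.map (Algebra.lsmul k k P) (Algebra.lsmul k k W))).comp
    ((D.Δ α β).comp (castAlg k hγ).toAlgHom)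

/-- The `H_γ`-module structure on `P ⊗ W` (for `γ = αβ`) induced by `Δ_{α,β}`. -/
noncomputable def tensorModule (D : HopfGCoalgebra k G H) (α β γ : G) (hγ : γ = α * β)
    (P W : Type) [AddCommGroup P] [Module k P] [Module (H α) P] [IsScalarTower k (H α) P]
    [AddCommGroup W] [Module k W] [Module (H β) W] [IsScalarTower k (H β) W] :
    Module (H γ) (P ⊗[k] W) :=
  Module.compHom (P ⊗[k] W) (D.deltaRep α β γ hγ P W).toRingHom

theorem tensorModuleTower (D : HopfGCoalgebra k G H) (α β γ : G) (hγ : γ = α * β)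
    (P W : Type) [AddCommGroup P] [Module k P] [Module (H α) P] [IsScalarTower k (H α) P]
    [AddCommGroup W] [Module k W] [Module (H β) W] [IsScalarTower k (H β) W] :
    letI := D.tensorModule α β γ hγ P W
    IsScalarTower k (H γ) (P ⊗[k] W) := by
  letI := D.tensorModule α β γ hγ P W
  refine ⟨fun c h x => ?_⟩
  show (D.deltaRep α β γ hγ P W (c • h)) x = c • (D.deltaRep α β γ hγ P W h) x
  rw [map_smul]
  rfl

/-- The right partial trace `tr^r_W(f)` of a `k`-linear map `f : P ⊗ W → P ⊗ W`, computed
with the duality morphisms of the pivotal structure (`gβ` is the pivot in degree `β`). -/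
noncomputable def trR (β : G) (P W : Type)
    [AddCommGroup P] [Module k P]
    [AddCommGroup W] [Module k W] [Module (H β) W] [IsScalarTower k (H β) W]
    [FiniteDimensional k W]
    (gβ : H β) (f : (P ⊗[k] W) →ₗ[k] (P ⊗[k] W)) : P →ₗ[k] P :=
  (TensorProduct.rid k P).toLinearMap
    ∘ₗ TensorProduct.map LinearMap.id
        (contractRight k W ∘ₗ TensorProduct.map (Algebra.lsmul k k W gβ) LinearMap.id)
    ∘ₗ (TensorProduct.assoc k P W (Module.Dual k W)).toLinearMap
    ∘ₗ TensorProduct.map f LinearMap.id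
    ∘ₗ (TensorProduct.assoc k P W (Module.Dual k W)).symm.toLinearMap
    ∘ₗ TensorProduct.map LinearMap.id (coevaluation k W)
    ∘ₗ (TensorProduct.rid k P).symm.toLinearMap

/-- The left partial trace `tr^l_W(f)` of a `k`-linear map `f : W ⊗ P → W ⊗ P`, computed
with the duality morphisms of the pivotal structure (`gβinv` is the inverse of the pivot in
degree `β`). -/
noncomputable def trL (β : G) (W P : Type)
    [AddCommGroup P] [Module k P]
    [AddCommGroup W] [Module k W] [Module (H β) W] [IsScalarTower k (H β) W]
    [FiniteDimensional k W]
    (gβinv : H β) (f : (W ⊗[k] P) →ₗ[k] (W ⊗[k] P)) : P →ₗ[k] P :=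
  (TensorProduct.lid k P).toLinearMap
    ∘ₗ TensorProduct.map (contractLeft k W) LinearMap.id
    ∘ₗ (TensorProduct.assoc k (Module.Dual k W) W P).symm.toLinearMap
    ∘ₗ TensorProduct.map LinearMap.id f
    ∘ₗ (TensorProduct.assoc k (Module.Dual k W) W P).toLinearMap
    ∘ₗ TensorProduct.map
        ((TensorProduct.comm k W (Module.Dual k W)).toLinearMap
          ∘ₗ TensorProduct.map (Algebra.lsmul k k W gβinv) LinearMap.id
          ∘ₗ coevaluation k W)
        LinearMap.id
    ∘ₗ (TensorProduct.lid k P).symm.toLinearMap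

end HopfGCoalgebra

/-- The data of a `k`-linear form on `End_{H_γ}(P)` for every `γ ∈ G` and every
finite-dimensional projective `H_γ`-module `P`. -/
abbrev TraceData (k G : Type) [Field k] [Group G] (H : G → Type)
    [∀ γ : G, Ring (H γ)] [∀ γ : G, Algebra k (H γ)] : Type 1 :=
  ∀ (γ : G) (P : Type) [AddCommGroup P] [Module k P] [Module (H γ) P]
    [IsScalarTower k (H γ) P] [FiniteDimensional k P] [Module.Projective (H γ) P],
    (P →ₗ[H γ] P) →ₗ[k] k

namespace HopfGCoalgebra

variable {k G : Type} [Field k] [Group G] {H : G → Type}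
  [∀ γ : G, Ring (H γ)] [∀ γ : G, Algebra k (H γ)]

/-- A cyclic trace on `H`-pmod. -/
def IsCyclicTrace (t : TraceData k G H) : Prop :=
  ∀ (γ : G) (P Q : Type)
    [AddCommGroup P] [Module k P] [Module (H γ) P] [IsScalarTower k (H γ) P]
    [FiniteDimensional k P] [Module.Projective (H γ) P]
    [AddCommGroup Q] [Module k Q] [Module (H γ) Q] [IsScalarTower k (H γ) Q]
    [FiniteDimensional k Q] [Module.Projective (H γ) Q]
    (f : P →ₗ[H γ] Q) (g : Q →ₗ[H γ] P),
    t γ P (g.comp f) = t γ Q (f.comp g)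

/-- The right partial trace property of a trace `t`:
`t_{P⊗W}(f) = t_P(tr^r_W(f))` for every projective `H_α`-module `P`, finite-dimensional
`H_β`-module `W`, and `H_{αβ}`-linear endomorphism `f` of `P ⊗ W`. -/
def HasRightPartialTraceProperty (D : HopfGCoalgebra k G H) (g : ∀ γ : G, (H γ)ˣ)
    (t : TraceData k G H) : Prop :=
  ∀ (α β : G) (P W : Type)
    [AddCommGroup P] [Module k P] [Module (H α) P] [IsScalarTower k (H α) P]
    [FiniteDimensional k P] [Module.Projective (H α) P]
    [AddCommGroup W] [Module k W] [Module (H β) W] [IsScalarTower k (H β) W]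
    [FiniteDimensional k W],
    letI := D.tensorModule α β (α * β) rfl P W
    haveI := D.tensorModuleTower α β (α * β) rfl P W
    ∀ [Module.Projective (H (α * β)) (P ⊗[k] W)]
      (f : (P ⊗[k] W) →ₗ[H (α * β)] (P ⊗[k] W)) (f' : P →ₗ[H α] P),
      f'.restrictScalars k = trR β P W (g β : H β) (f.restrictScalars k) →
      t (α * β) (P ⊗[k] W) f = t α P f'

/-- The left partial trace property of a trace `t`:
`t_{W⊗P}(f) = t_P(tr^l_W(f))` for every projective `H_α`-module `P`, finite-dimensional
`H_β`-module `W`, and `H_{βα}`-linear endomorphism `f` of `W ⊗ P`. -/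
def HasLeftPartialTraceProperty (D : HopfGCoalgebra k G H) (g : ∀ γ : G, (H γ)ˣ)
    (t : TraceData k G H) : Prop :=
  ∀ (α β : G) (P W : Type)
    [AddCommGroup P] [Module k P] [Module (H α) P] [IsScalarTower k (H α) P]
    [FiniteDimensional k P] [Module.Projective (H α) P]
    [AddCommGroup W] [Module k W] [Module (H β) W] [IsScalarTower k (H β) W]
    [FiniteDimensional k W],
    letI := D.tensorModule β α (β * α) rfl W P
    haveI := D.tensorModuleTower β α (β * α) rfl W P
    ∀ [Module.Projective (H (β * α)) (W ⊗[k] P)]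
      (f : (W ⊗[k] P) →ₗ[H (β * α)] (W ⊗[k] P)) (f' : P →ₗ[H α] P),
      f'.restrictScalars k = trL β W P (((g β)⁻¹ : (H β)ˣ) : H β) (f.restrictScalars k) →
      t (β * α) (W ⊗[k] P) f = t α P f'

/-- A right modified trace on `H`-pmod. -/
def IsRightModifiedTrace (D : HopfGCoalgebra k G H) (g : ∀ γ : G, (H γ)ˣ)
    (t : TraceData k G H) : Prop :=
  IsCyclicTrace t ∧ D.HasRightPartialTraceProperty g t

/-- A left modified trace on `H`-pmod. -/
def IsLeftModifiedTrace (D : HopfGCoalgebra k G H) (g : ∀ γ : G, (H γ)ˣ)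
    (t : TraceData k G H) : Prop :=
  IsCyclicTrace t ∧ D.HasLeftPartialTraceProperty g t

end HopfGCoalgebra

namespace HopfGCoalgebra

variable {k G : Type} [Field k] [Group G] {H : G → Type}
  [∀ γ : G, Ring (H γ)] [∀ γ : G, Algebra k (H γ)]

theorem castAlg_castAlg {γ γ' : G} (h : γ = γ') (h' : γ' = γ) (x : H γ) :
    castAlg k h' (castAlg k h x) = x := by
  subst h
  rfl

theorem deltaRep_trivial_right (D : HopfGCoalgebra k G H) (α : G) (V W : Type)
    [AddCommGroup V] [Module k V] [Module (H α) V] [IsScalarTower k (H α) V]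
    [AddCommGroup W] [Module k W] (h : H α) :
    letI := D.trivialModule W
    haveI := D.trivialModuleTower W
    D.deltaRep α 1 α (mul_one α).symm V W h
      = TensorProduct.map (Algebra.lsmul k k V h) LinearMap.id := by
  letI := D.trivialModule W
  haveI := D.trivialModuleTower W
  let A : H α →ₐ[k] Module.End k V := Algebra.lsmul k k V
  let B : H (1 : G) →ₐ[k] Module.End k W := Algebra.lsmul k k W
  have key : ∀ y : H α ⊗[k] H (1 : G),
      Module.endTensorEndAlgHom.comp (Algebra.TensorProduct.map A B) y
      = TensorProduct.map (A
          (TensorProduct.rid k (H α) (TensorProduct.map LinearMap.id D.ε.toLinearMap y)))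
          LinearMap.id := by
    intro y
    induction y with
    | zero => simp
    | add x y hx hy => simp only [map_add, hx, hy, TensorProduct.map_add_left]
    | tmul a b =>
      ext v w
      change (a • v) ⊗ₜ[k] (D.ε b • w) = ((D.ε b • a) • v) ⊗ₜ[k] w
      rw [smul_assoc, TensorProduct.smul_tmul (D.ε b) (a • v) w]
  have hc := D.counit_right α (castAlg k (mul_one α).symm h)
  rw [castAlg_castAlg] at hc
  refine (key (D.Δ α 1 (castAlg k (mul_one α).symm h))).trans ?_
  rw [hc]

theorem deltaRep_trivial_left (D : HopfGCoalgebra k G H) (α : G) (W V : Type)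
    [AddCommGroup V] [Module k V] [Module (H α) V] [IsScalarTower k (H α) V]
    [AddCommGroup W] [Module k W] (h : H α) :
    letI := D.trivialModule W
    haveI := D.trivialModuleTower W
    D.deltaRep 1 α α (one_mul α).symm W V h
      = TensorProduct.map LinearMap.id (Algebra.lsmul k k V h) := by
  letI := D.trivialModule W
  haveI := D.trivialModuleTower W
  let A : H (1 : G) →ₐ[k] Module.End k W := Algebra.lsmul k k W
  let B : H α →ₐ[k] Module.End k V := Algebra.lsmul k k V
  have key : ∀ y : H (1 : G) ⊗[k] H α,
      Module.endTensorEndAlgHom.comp (Algebra.TensorProduct.map A B) y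
      = TensorProduct.map LinearMap.id (B
          (TensorProduct.lid k (H α) (TensorProduct.map D.ε.toLinearMap LinearMap.id y))) := by
    intro y
    induction y with
    | zero => simp
    | add x y hx hy => simp only [map_add, hx, hy, TensorProduct.map_add_right]
    | tmul a b =>
      ext w v
      change (D.ε a • w) ⊗ₜ[k] (b • v) = w ⊗ₜ[k] ((D.ε a • b) • v)
      rw [smul_assoc, TensorProduct.smul_tmul]
  have hc := D.counit_left α (castAlg k (one_mul α).symm h)
  rw [castAlg_castAlg] at hc
  refine (key (D.Δ 1 α (castAlg k (one_mul α).symm h))).trans ?_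
  rw [hc]

/-- If `c` acts as the identity on `W`, the right partial trace is `∑ᵢ πᵢ f ιᵢ` for the
inclusions `ιᵢ` and projections `πᵢ` of `P ⊗ W` attached to a basis of `W`. -/
theorem trR_apply_of_smul_eq (β : G) (P W : Type)
    [AddCommGroup P] [Module k P]
    [AddCommGroup W] [Module k W] [Module (H β) W] [IsScalarTower k (H β) W]
    [FiniteDimensional k W] (c : H β) (hc : ∀ w : W, c • w = w)
    (f : (P ⊗[k] W) →ₗ[k] (P ⊗[k] W)) (v : P) :
    trR β P W c f v = ∑ i, TensorProduct.rid k P (TensorProduct.map LinearMap.id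
      ((Module.Basis.ofVectorSpace k W).coord i)
      (f (v ⊗ₜ (Module.Basis.ofVectorSpace k W) i))) := by
  have key : ∀ (x : P ⊗[k] W) (φ : Module.Dual k W),
      TensorProduct.rid k P (TensorProduct.map LinearMap.id
        (contractRight k W ∘ₗ TensorProduct.map (Algebra.lsmul k k W c) LinearMap.id)
        (TensorProduct.assoc k P W (Module.Dual k W) (x ⊗ₜ φ)))
      = TensorProduct.rid k P (TensorProduct.map LinearMap.id φ x) := by
    intro x φ
    induction x with
    | zero => simp
    | add x y hx hy => simp only [TensorProduct.add_tmul, map_add, hx, hy]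
    | tmul p w => simp [hc]
  simp only [trR, LinearMap.comp_apply, LinearEquiv.coe_coe, TensorProduct.rid_symm_apply,
    TensorProduct.map_tmul, coevaluation_apply_one, LinearMap.id_apply, TensorProduct.tmul_sum,
    map_sum, TensorProduct.assoc_symm_tmul]
  exact Finset.sum_congr rfl fun i _ => key _ _

/-- If `c` acts as the identity on `W`, the left partial trace is `∑ᵢ πᵢ f ιᵢ` for the
inclusions `ιᵢ` and projections `πᵢ` of `W ⊗ P` attached to a basis of `W`. -/
theorem trL_apply_of_smul_eq (β : G) (W P : Type)
    [AddCommGroup P] [Module k P]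
    [AddCommGroup W] [Module k W] [Module (H β) W] [IsScalarTower k (H β) W]
    [FiniteDimensional k W] (c : H β) (hc : ∀ w : W, c • w = w)
    (f : (W ⊗[k] P) →ₗ[k] (W ⊗[k] P)) (v : P) :
    trL β W P c f v = ∑ i, TensorProduct.lid k P (TensorProduct.map
      ((Module.Basis.ofVectorSpace k W).coord i) LinearMap.id
      (f ((Module.Basis.ofVectorSpace k W) i ⊗ₜ v))) := by
  have key : ∀ (x : W ⊗[k] P) (φ : Module.Dual k W),
      TensorProduct.lid k P (TensorProduct.map (contractLeft k W) LinearMap.id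
        ((TensorProduct.assoc k (Module.Dual k W) W P).symm (φ ⊗ₜ x)))
      = TensorProduct.lid k P (TensorProduct.map φ LinearMap.id x) := by
    intro x φ
    induction x with
    | zero => simp
    | add x y hx hy => simp only [TensorProduct.tmul_add, map_add, hx, hy]
    | tmul w p => simp
  simp only [trL, LinearMap.comp_apply, LinearEquiv.coe_coe, TensorProduct.lid_symm_apply,
    TensorProduct.map_tmul, coevaluation_apply_one, LinearMap.id_apply, TensorProduct.sum_tmul,
    map_sum, TensorProduct.assoc_tmul, TensorProduct.comm_tmul, Algebra.lsmul_coe, hc]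
  exact Finset.sum_congr rfl fun i _ => key _ _

/-- If `M` is a finite direct sum of copies of `V` with inclusions `ι` and projections `π`, a
cyclic trace of `f` is the trace of the sum of its diagonal blocks. -/
theorem IsCyclicTrace.eq_of_decomposition {t : TraceData k G H} (ht : IsCyclicTrace t) {α : G}
    {V M I : Type} [Fintype I]
    [AddCommGroup V] [Module k V] [Module (H α) V] [IsScalarTower k (H α) V]
    [FiniteDimensional k V] [Module.Projective (H α) V]
    [AddCommGroup M] [Module k M] [Module (H α) M] [IsScalarTower k (H α) M]
    [FiniteDimensional k M] [Module.Projective (H α) M]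
    (ι : I → V →ₗ[k] M) (π : I → M →ₗ[k] V)
    (hι : ∀ i (h : H α) v, ι i (h • v) = h • ι i v)
    (hπ : ∀ i (h : H α) x, π i (h • x) = h • π i x)
    (hid : ∀ x, ∑ i, ι i (π i x) = x) (f : M →ₗ[H α] M) (f' : V →ₗ[H α] V)
    (hf : ∀ v, f' v = ∑ i, π i (f (ι i v))) :
    t α M f = t α V f' := by
  let ι' : I → V →ₗ[H α] M := fun i => { ι i with map_smul' := hι i }
  let π' : I → M →ₗ[H α] V := fun i => { π i with map_smul' := hπ i }
  have h1 : f = ∑ i, (f ∘ₗ ι' i) ∘ₗ π' i := by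
    ext x
    simp only [LinearMap.sum_apply, LinearMap.comp_apply, ← map_sum]
    exact congrArg f (hid x).symm
  have h2 : f' = ∑ i, π' i ∘ₗ (f ∘ₗ ι' i) := by
    ext x
    simp only [LinearMap.sum_apply]
    exact hf x
  rw [h2]
  conv_lhs => rw [h1]
  rw [map_sum, map_sum]
  exact Finset.sum_congr rfl fun i _ => (ht α V M (f ∘ₗ ι' i) (π' i)).symm

theorem IsPivot.smul_trivial {D : HopfGCoalgebra k G H} {g : ∀ γ : G, (H γ)ˣ}
    (hpiv : D.IsPivot g) (W : Type) [AddCommGroup W] [Module k W] (w : W) :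
    letI := D.trivialModule W
    (g 1 : H (1 : G)) • w = w := by
  change D.ε (g 1 : H 1) • w = w
  rw [hpiv.counit, one_smul]

end HopfGCoalgebra

open HopfGCoalgebra in
/-- Partial traces with respect to a trivial module: for a cyclic trace `t`, a projective
`H_α`-module `V` and a finite-dimensional `k`-space `W` with the trivial `H₁`-action,
`t_{V⊗W}(f) = t_V(tr^r_W(f))` and `t_{W⊗V}(f) = t_V(tr^l_W(f))`. -/
theorem cyclic_trace_partial_trace_trivial
    {k G : Type} [Field k] [Group G] {H : G → Type}
    [∀ γ : G, Ring (H γ)] [∀ γ : G, Algebra k (H γ)] [∀ γ : G, FiniteDimensional k (H γ)]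
    (D : HopfGCoalgebra k G H) (g : ∀ γ : G, (H γ)ˣ) (hpiv : D.IsPivot g)
    (t : TraceData k G H) (ht : IsCyclicTrace t) (α : G)
    (V W : Type)
    [AddCommGroup V] [Module k V] [Module (H α) V] [IsScalarTower k (H α) V]
    [FiniteDimensional k V] [Module.Projective (H α) V]
    [AddCommGroup W] [Module k W] [FiniteDimensional k W] :
    (letI := D.trivialModule W
     haveI := D.trivialModuleTower W
     letI := D.tensorModule α 1 α (mul_one α).symm V W
     haveI := D.tensorModuleTower α 1 α (mul_one α).symm V W
     ∀ [Module.Projective (H α) (V ⊗[k] W)]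
       (f : (V ⊗[k] W) →ₗ[H α] (V ⊗[k] W)) (f' : V →ₗ[H α] V),
       f'.restrictScalars k = trR 1 V W ((g 1 : H (1 : G))) (f.restrictScalars k) →
       t α (V ⊗[k] W) f = t α V f')
    ∧ (letI := D.trivialModule W
       haveI := D.trivialModuleTower W
       letI := D.tensorModule 1 α α (one_mul α).symm W V
       haveI := D.tensorModuleTower 1 α α (one_mul α).symm W V
       ∀ [Module.Projective (H α) (W ⊗[k] V)]
         (f : (W ⊗[k] V) →ₗ[H α] (W ⊗[k] V)) (f' : V →ₗ[H α] V),
         f'.restrictScalars k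
             = trL 1 W V (((g 1)⁻¹ : (H (1 : G))ˣ) : H (1 : G)) (f.restrictScalars k) →
         t α (W ⊗[k] V) f = t α V f') := by
    -- Equivariance of `ιᵢ` and `πᵢ` is only stated through `eq_of_decomposition`, whose module
  -- structures come from the goal: written out, `h • x` on `V ⊗ W` could elaborate to Mathlib's
  -- action on the left factor, which is not definitionally the one induced by `Δ`.
  letI := D.trivialModule W
  haveI := D.trivialModuleTower W
  let b := Module.Basis.ofVectorSpace k W
  constructor
  · letI := D.tensorModule α 1 α (mul_one α).symm V W
    haveI := D.tensorModuleTower α 1 α (mul_one α).symm V W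
    intro hproj f f' hf
    let π := fun i => (TensorProduct.rid k V).toLinearMap ∘ₗ
      TensorProduct.map (LinearMap.id : V →ₗ[k] V) (b.coord i)
    refine ht.eq_of_decomposition (fun i => (TensorProduct.mk k V W).flip (b i)) π
      (fun i h v => ?_) (fun i h x => ?_) (fun x => ?_) f f' fun v => ?_
    · exact (LinearMap.congr_fun (D.deltaRep_trivial_right α V W h) (v ⊗ₜ b i)).symm
    · refine (congrArg (π i) (LinearMap.congr_fun (D.deltaRep_trivial_right α V W h) x)).trans ?_
      induction x with
      | zero => simp
      | add x y hx hy => simp only [map_add, smul_add, hx, hy]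
      | tmul v w => simp [π, smul_algebra_smul_comm]
    · induction x with
      | zero => simp
      | add x y hx hy => simp only [map_add, Finset.sum_add_distrib, hx, hy]
      | tmul v w =>
        simp only [π, LinearMap.flip_apply, TensorProduct.mk_apply, LinearMap.comp_apply,
          LinearEquiv.coe_coe, TensorProduct.map_tmul, LinearMap.id_apply,
          TensorProduct.rid_tmul, TensorProduct.smul_tmul, Module.Basis.coord_apply,
          ← TensorProduct.tmul_sum, b.sum_repr]
    · exact (LinearMap.congr_fun hf v).trans
        (trR_apply_of_smul_eq 1 V W _ (hpiv.smul_trivial W) _ v)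
  · letI := D.tensorModule 1 α α (one_mul α).symm W V
    haveI := D.tensorModuleTower 1 α α (one_mul α).symm W V
    intro hproj f f' hf
    let π := fun i => (TensorProduct.lid k V).toLinearMap ∘ₗ
      TensorProduct.map (b.coord i) (LinearMap.id : V →ₗ[k] V)
    refine ht.eq_of_decomposition (fun i => TensorProduct.mk k W V (b i)) π
      (fun i h v => ?_) (fun i h x => ?_) (fun x => ?_) f f' fun v => ?_
    · exact (LinearMap.congr_fun (D.deltaRep_trivial_left α W V h) (b i ⊗ₜ v)).symm
    · refine (congrArg (π i) (LinearMap.congr_fun (D.deltaRep_trivial_left α W V h) x)).trans ?_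
      induction x with
      | zero => simp
      | add x y hx hy => simp only [map_add, smul_add, hx, hy]
      | tmul w v => simp [π, smul_algebra_smul_comm]
    · induction x with
      | zero => simp
      | add x y hx hy => simp only [map_add, Finset.sum_add_distrib, hx, hy]
      | tmul w v =>
        simp only [π, TensorProduct.mk_apply, LinearMap.comp_apply,
          LinearEquiv.coe_coe, TensorProduct.map_tmul, LinearMap.id_apply,
          TensorProduct.lid_tmul, ← TensorProduct.smul_tmul, Module.Basis.coord_apply,
          ← TensorProduct.sum_tmul, b.sum_repr]
    · refine (LinearMap.congr_fun hf v).trans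
        (trL_apply_of_smul_eq 1 W V _ (fun w => ?_) _ v)
      conv_lhs => rw [← hpiv.smul_trivial W w]
      rw [← mul_smul, Units.inv_mul, one_smul]
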